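/- Let b : ℝ² → ℝ be smooth, Λ-periodic, and even (b(−x) = b(x) for all x ∈ ℝ²), and set B(x) = b(x)·σ₂. Let Φ₁ : ℝ² → ℂ be smooth and K-pseudo-periodic, and define Φ₂(x) = conj(Φ₁(−x)). Then ∫_Ω conj(Φ₁(x))·(L^B Φ₁)(x) dx = −∫_Ω conj(Φ₂(x))·(L^B Φ₂)(x) dx. -/

import Mathlib

/-!
Since `b` is scalar and second derivatives commute, `L^{bσ₂} φ = i{b, φ}` with the Poisson bracket
`{b, φ} = ∂₁b ∂₂φ − ∂₂b ∂₁φ` (`LM_eq`). Put `G = conj Φ₁ · L^B Φ₁`.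

* *Symmetry.* Evenness of `b` and `Φ₂(x) = conj Φ₁(−x)` give
  `conj Φ₂ · L^B Φ₂ = −conj (G(−x))`. As `G` is Λ-periodic and `v₁ + v₂ − Ω = Ω`, the integral of
  the left-hand side over `Ω` is `−conj ∫_Ω G` (`setIntegral_cell_neg`).
* *Reality.* `G − conj G = i{b, |Φ₁|²}`, and `|Φ₁|²` is Λ-periodic because the pseudo-periodicity
  factor is unimodular. Hence `{b, |Φ₁|²} = ∂₁(b ∂₂|Φ₁|²) − ∂₂(b ∂₁|Φ₁|²)` is the divergence of a
  periodic field, and its integral over `Ω` vanishes (`setIntegral_cell_pd`). So `∫_Ω G` is real.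
-/


noncomputable section

open MeasureTheory

/-- Points of the plane. -/
abbrev Vec : Type := Fin 2 → ℝ

/-- Standard dot product on ℝ². -/
def dot (x y : Vec) : ℝ := x 0 * y 0 + x 1 * y 1

/-- Lattice vector v₁. -/
def latv₁ : Vec := ![Real.sqrt 3 / 2, 1 / 2]

/-- Lattice vector v₂. -/
def latv₂ : Vec := ![Real.sqrt 3 / 2, -(1 / 2)]

/-- The triangular lattice Λ = ℤv₁ ⊕ ℤv₂. -/
def TriLat : Set Vec := {v | ∃ m₁ m₂ : ℤ, v = (m₁ : ℝ) • latv₁ + (m₂ : ℝ) • latv₂}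

/-- The fundamental cell Ω. -/
def cellΩ : Set Vec :=
  {x | ∃ θ₁ ∈ Set.Icc (0:ℝ) 1, ∃ θ₂ ∈ Set.Icc (0:ℝ) 1, x = θ₁ • latv₁ + θ₂ • latv₂}

/-- Dual lattice vector k₁. -/
def dualk₁ : Vec := (4 * Real.sqrt 3 * Real.pi / 3) • ![1 / 2, Real.sqrt 3 / 2]

/-- Dual lattice vector k₂. -/
def dualk₂ : Vec := (4 * Real.sqrt 3 * Real.pi / 3) • ![1 / 2, -(Real.sqrt 3 / 2)]

/-- The high-symmetry point K = (k₁ − k₂)/3. -/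
def Kpt : Vec := (3:ℝ)⁻¹ • (dualk₁ - dualk₂)

/-- `f` is K-pseudo-periodic: f(x+v) = e^{iK·v} f(x) for all x and all v ∈ Λ. -/
def PseudoPeriodic (f : Vec → ℂ) : Prop :=
  ∀ x : Vec, ∀ v ∈ TriLat, f (x + v) = Complex.exp (Complex.I * (dot Kpt v : ℂ)) * f x

/-- The partial derivative ∂ᵢ of a ℂ-valued function on ℝ². -/
def pd (i : Fin 2) (f : Vec → ℂ) : Vec → ℂ := fun x => fderiv ℝ f x (Pi.single i 1)

/-- The Pauli matrix σ₂. -/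
def σ₂ : Matrix (Fin 2) (Fin 2) ℂ := !![0, -Complex.I; Complex.I, 0]

/-- The second order operator L^M φ = −∇·(M∇φ). -/
def LM (M : Vec → Matrix (Fin 2) (Fin 2) ℂ) (φ : Vec → ℂ) : Vec → ℂ :=
  fun x => -(∑ i : Fin 2, pd i (fun y => ∑ j : Fin 2, M y i j * pd j φ y) x)

/-- The clockwise 2π/3 rotation matrix R. -/
def Rrot : Matrix (Fin 2) (Fin 2) ℝ :=
  !![-(1 / 2), Real.sqrt 3 / 2; -(Real.sqrt 3 / 2), -(1 / 2)]

/-- The action x ↦ Rᵀx. -/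
def Rt (x : Vec) : Vec := Rrot.transpose.mulVec x

/-- τ = e^{2πi/3}. -/
def τ : ℂ := Complex.exp (2 * Real.pi * Complex.I / 3)

/-- The first order operator 𝒜, componentwise:
(𝒜φ)ⱼ = (1/i)(Σₖ Aⱼₖ ∂ₖφ + Σᵢ ∂ᵢ(Aᵢⱼ φ)). -/
def calA (A : Vec → Matrix (Fin 2) (Fin 2) ℂ) (φ : Vec → ℂ) (j : Fin 2) : Vec → ℂ :=
  fun x => Complex.I⁻¹ *
    ((∑ k : Fin 2, A x j k * pd k φ x) + ∑ i : Fin 2, pd i (fun y => A y i j * φ y) x)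

open scoped ComplexConjugate

/-! ### The fundamental cell -/

/-- Lattice coordinates: the linear map `θ ↦ θ₁v₁ + θ₂v₂`. -/
def latT : Vec →L[ℝ] Vec :=
  (ContinuousLinearMap.proj (R := ℝ) (φ := fun _ : Fin 2 => ℝ) 0).smulRight latv₁ +
    (ContinuousLinearMap.proj (R := ℝ) (φ := fun _ : Fin 2 => ℝ) 1).smulRight latv₂

lemma latT_apply (θ : Vec) : latT θ = θ 0 • latv₁ + θ 1 • latv₂ := by
  simp [latT]

lemma latv₁_mem : latv₁ ∈ TriLat := ⟨1, 0, by simp⟩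

lemma latv₂_mem : latv₂ ∈ TriLat := ⟨0, 1, by simp⟩

lemma latv_add_mem : latv₁ + latv₂ ∈ TriLat := ⟨1, 1, by simp⟩

lemma sqrt3_pos : 0 < Real.sqrt 3 := Real.sqrt_pos.2 (by norm_num)

lemma latT_injective : Function.Injective latT := by
  intro x y h
  rw [latT_apply, latT_apply] at h
  have h0 := congrFun h 0
  have h1 := congrFun h 1
  simp [latv₁, latv₂] at h0 h1
  have h2 : x 0 + x 1 = y 0 + y 1 := by
    apply mul_right_cancel₀ (ne_of_gt (half_pos sqrt3_pos))
    linarith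
  ext i
  fin_cases i <;> simp <;> linarith

lemma cell_eq_image : cellΩ = latT '' Set.Icc 0 1 := by
  ext x
  constructor
  · rintro ⟨a, ha, c, hc, rfl⟩
    refine ⟨![a, c], ⟨?_, ?_⟩, by simp [latT_apply]⟩
    · intro i; fin_cases i <;> simp [ha.1, hc.1]
    · intro i; fin_cases i <;> simp [ha.2, hc.2]
  · rintro ⟨θ, ⟨h0, h1⟩, rfl⟩
    exact ⟨θ 0, ⟨h0 0, h1 0⟩, θ 1, ⟨h0 1, h1 1⟩, latT_apply θ⟩

lemma isCompact_cell : IsCompact cellΩ := by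
  rw [cell_eq_image]
  exact isCompact_Icc.image latT.continuous

lemma setIntegral_cell (g : Vec → ℂ) :
    ∫ x in cellΩ, g x = |latT.det| • ∫ θ in Set.Icc (0 : Vec) 1, g (latT θ) := by
  rw [cell_eq_image, integral_image_eq_integral_abs_det_fderiv_smul volume measurableSet_Icc
    (fun x _ => latT.hasFDerivWithinAt) latT_injective.injOn, integral_smul]

/-- The cell is symmetric about `(v₁ + v₂)/2`, so reflecting a periodic function through the origin
does not change its integral. -/
lemma setIntegral_cell_neg (H : Vec → ℂ) (hH : ∀ x, ∀ v ∈ TriLat, H (x + v) = H x) :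
    ∫ x in cellΩ, H (-x) = ∫ x in cellΩ, H x := by
  have hpre : (fun x => (latv₁ + latv₂) - x) ⁻¹' cellΩ = cellΩ := by
    have key : ∀ x ∈ cellΩ, (latv₁ + latv₂) - x ∈ cellΩ := by
      rintro x ⟨a, ha, c, hc, rfl⟩
      refine ⟨1 - a, ⟨by linarith [ha.2], by linarith [ha.1]⟩, 1 - c,
        ⟨by linarith [hc.2], by linarith [hc.1]⟩, by module⟩
    ext x
    refine ⟨fun h => ?_, key x⟩
    simpa using key _ h
  have h := (Measure.measurePreserving_sub_left (volume : Measure Vec)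
    (latv₁ + latv₂)).setIntegral_preimage_emb
      (MeasurableEquiv.subLeft (latv₁ + latv₂)).measurableEmbedding H cellΩ
  rw [hpre] at h
  rw [← h]
  congr 1
  ext x
  rw [← hH (-x) _ latv_add_mem]
  congr 1
  abel

/-- Divergence theorem in lattice coordinates: opposite faces of the unit square cancel. -/
lemma setIntegral_unit_fderiv (F : Vec → ℂ) (hF : ContDiff ℝ 1 F)
    (hper : ∀ x, ∀ v ∈ TriLat, F (x + v) = F x) (c : Vec) :
    ∫ θ in Set.Icc (0 : Vec) 1, fderiv ℝ F (latT θ) (latT c) = 0 := by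
  have hd : ∀ θ, HasFDerivAt (fun θ => F (latT θ)) ((fderiv ℝ F (latT θ)).comp latT) θ := fun θ =>
    ((hF.differentiable one_ne_zero) (latT θ)).hasFDerivAt.comp θ latT.hasFDerivAt
  have hdiv : ∀ θ, ∑ i : Fin 2, (ContinuousLinearMap.pi (fun i : Fin 2 =>
      c i • ((fderiv ℝ F (latT θ)).comp latT))) (Pi.single i 1) i
        = fderiv ℝ F (latT θ) (latT c) := by
    intro θ
    have hc : c = c 0 • Pi.single 0 1 + c 1 • Pi.single 1 1 := by
      ext i; fin_cases i <;> simp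
    conv_rhs => rw [hc]
    simp [Fin.sum_univ_two]
  have hcont : Continuous (fun θ => fderiv ℝ F (latT θ) (latT c)) :=
    ((hF.continuous_fderiv one_ne_zero).comp latT.continuous).clm_apply continuous_const
  have h := integral_divergence_of_hasFDerivAt_off_countable (E := ℂ) (n := 1) 0 1
    (fun i => zero_le_one) (fun θ i => c i • F (latT θ))
    (fun θ => ContinuousLinearMap.pi (fun i : Fin 2 => c i • ((fderiv ℝ F (latT θ)).comp latT)))
    ∅ Set.countable_empty
    (by
      have := hF.continuous
      have := latT.continuous
      exact Continuous.continuousOn (by fun_prop))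
    (fun θ _ => hasFDerivAt_pi.2 fun i => (hd θ).const_smul (c i))
    (by
      simp only [hdiv]
      exact hcont.continuousOn.integrableOn_compact isCompact_Icc)
  simp only [hdiv] at h
  rw [h]
  refine Finset.sum_eq_zero fun i _ => ?_
  rw [sub_eq_zero]
  congr 1
  ext x
  congr 1
  have hface : ∃ v ∈ TriLat, latT (i.insertNth ((1 : Vec) i) x)
      = latT (i.insertNth ((0 : Vec) i) x) + v := by
    fin_cases i
    · refine ⟨latv₁, latv₁_mem, ?_⟩
      simp [latT_apply]
      abel
    · refine ⟨latv₂, latv₂_mem, ?_⟩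
      have h (a : ℝ) : (Fin.insertNth (α := fun _ => ℝ) (1 : Fin 2) a x) 0 = x 0 := rfl
      simp [latT_apply, h]
  obtain ⟨v, hv, he⟩ := hface
  rw [he, hper _ v hv]

lemma setIntegral_cell_pd (F : Vec → ℂ) (hF : ContDiff ℝ 1 F)
    (hper : ∀ x, ∀ v ∈ TriLat, F (x + v) = F x) (j : Fin 2) :
    ∫ x in cellΩ, pd j F x = 0 := by
  have he : ∃ c, latT c = Pi.single j 1 := by
    have h3 := sqrt3_pos.ne'
    fin_cases j
    · refine ⟨![1 / Real.sqrt 3, 1 / Real.sqrt 3], ?_⟩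
      ext i
      fin_cases i <;> simp [latT_apply, latv₁, latv₂] <;> field_simp <;> norm_num
    · refine ⟨![1, -1], ?_⟩
      ext i
      fin_cases i <;> simp [latT_apply, latv₁, latv₂] <;> norm_num
  obtain ⟨c, hc⟩ := he
  rw [setIntegral_cell]
  simp only [pd, ← hc]
  rw [setIntegral_unit_fderiv F hF hper, smul_zero]

/-! ### Partial derivatives -/

lemma contDiff_pd (j : Fin 2) {f : Vec → ℂ} (hf : ContDiff ℝ (⊤ : ℕ∞) f) :
    ContDiff ℝ (⊤ : ℕ∞) (pd j f) :=
  (hf.fderiv_right (m := (⊤ : ℕ∞)) (by simp)).clm_apply contDiff_const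

lemma contDiff_differentiable {f : Vec → ℂ} (hf : ContDiff ℝ (⊤ : ℕ∞) f) :
    Differentiable ℝ f := hf.differentiable (by simp)

lemma contDiff_conj {f : Vec → ℂ} (hf : ContDiff ℝ (⊤ : ℕ∞) f) :
    ContDiff ℝ (⊤ : ℕ∞) (fun x => conj (f x)) :=
  Complex.conjCLE.contDiff.comp hf

lemma pd_mul (j : Fin 2) {f g : Vec → ℂ} (hf : ContDiff ℝ (⊤ : ℕ∞) f)
    (hg : ContDiff ℝ (⊤ : ℕ∞) g) (x : Vec) :
    pd j (fun y => f y * g y) x = pd j f x * g x + f x * pd j g x := by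
  have h := ((contDiff_differentiable hf x).hasFDerivAt.mul
    (contDiff_differentiable hg x).hasFDerivAt).fderiv
  simp only [pd]
  erw [h]
  simp
  ring

lemma pd_conj (j : Fin 2) {f : Vec → ℂ} (hf : ContDiff ℝ (⊤ : ℕ∞) f) (x : Vec) :
    pd j (fun y => conj (f y)) x = conj (pd j f x) := by
  have h := (Complex.conjCLE.hasFDerivAt.comp x
    (contDiff_differentiable hf x).hasFDerivAt).fderiv
  simp only [pd]
  erw [h]
  simp

lemma pd_comp_neg (j : Fin 2) {f : Vec → ℂ} (hf : ContDiff ℝ (⊤ : ℕ∞) f) (x : Vec) :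
    pd j (fun y => f (-y)) x = -pd j f (-x) := by
  have h := ((contDiff_differentiable hf (-x)).hasFDerivAt.comp x
    (hasFDerivAt_id x).neg).fderiv
  simp only [pd]
  erw [h]
  simp

lemma pd_shift (j : Fin 2) {f : Vec → ℂ} (hf : ContDiff ℝ (⊤ : ℕ∞) f) {v : Vec} {a : ℂ}
    (h : ∀ x, f (x + v) = a * f x) (x : Vec) : pd j f (x + v) = a * pd j f x := by
  have h1 : fderiv ℝ (fun y => f (y + v)) x = fderiv ℝ f (x + v) := fderiv_comp_add_right v
  have h2 : (fun y => f (y + v)) = fun y => a * f y := funext h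
  have h3 := ((contDiff_differentiable hf x).hasFDerivAt.const_mul a).fderiv
  simp only [pd]
  rw [← h1, h2]
  erw [h3]
  simp

lemma pd_comm {f : Vec → ℂ} (hf : ContDiff ℝ (⊤ : ℕ∞) f) (x : Vec) :
    pd 0 (pd 1 f) x = pd 1 (pd 0 f) x := by
  have hs := (hf.contDiffAt (x := x)).isSymmSndFDerivAt (by
    rw [minSmoothness_of_isRCLikeNormedField]
    exact WithTop.coe_le_coe.2 (le_top (a := (2 : ℕ∞))))
  have hd : DifferentiableAt ℝ (fderiv ℝ f) x :=
    (hf.fderiv_right (m := (⊤ : ℕ∞)) (by simp)).differentiable (by simp) x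
  have hp : ∀ i j : Fin 2, pd i (pd j f) x
      = fderiv ℝ (fderiv ℝ f) x (Pi.single i 1) (Pi.single j 1) := by
    intro i j
    have := fderiv_clm_apply hd (differentiableAt_const (Pi.single j (1 : ℝ)))
    change fderiv ℝ (fun y => fderiv ℝ f y (Pi.single j 1)) x (Pi.single i 1) = _
    rw [this]
    simp
  rw [hp, hp]
  exact hs _ _

/-! ### The Poisson bracket -/

/-- The Poisson bracket `{g, f} = ∂₁g ∂₂f − ∂₂g ∂₁f`. -/
def pbr (g f : Vec → ℂ) (x : Vec) : ℂ := pd 0 g x * pd 1 f x - pd 1 g x * pd 0 f x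

/-- The bracket is a divergence. -/
lemma pbr_eq_div {g f : Vec → ℂ} (hg : ContDiff ℝ (⊤ : ℕ∞) g) (hf : ContDiff ℝ (⊤ : ℕ∞) f)
    (x : Vec) :
    pbr g f x = pd 0 (fun y => g y * pd 1 f y) x - pd 1 (fun y => g y * pd 0 f y) x := by
  rw [pd_mul 0 hg (contDiff_pd 1 hf), pd_mul 1 hg (contDiff_pd 0 hf), pd_comm hf, pbr]
  ring

lemma LM_eq {g f : Vec → ℂ} (hg : ContDiff ℝ (⊤ : ℕ∞) g) (hf : ContDiff ℝ (⊤ : ℕ∞) f)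
    {B : Vec → Matrix (Fin 2) (Fin 2) ℂ} (hB : ∀ x, B x = g x • σ₂) (x : Vec) :
    LM B f x = Complex.I * pbr g f x := by
  have hI : ∀ a : ℂ, ContDiff ℝ (⊤ : ℕ∞) (fun _ : Vec => a) := fun a => contDiff_const
  have hc : ∀ (j : Fin 2) (a : ℂ), pd j (fun _ => a) x = 0 := by
    intro j a; simp [pd]
  have h0 : (fun y => ∑ j : Fin 2, B y 0 j * pd j f y)
      = fun y => -Complex.I * (g y * pd 1 f y) := by
    ext y; simp [hB, σ₂, Fin.sum_univ_two]; ring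
  have h1 : (fun y => ∑ j : Fin 2, B y 1 j * pd j f y)
      = fun y => Complex.I * (g y * pd 0 f y) := by
    ext y; simp [hB, σ₂, Fin.sum_univ_two]; ring
  rw [pbr_eq_div hg hf]
  simp only [LM]
  rw [Fin.sum_univ_two, h0, h1, pd_mul 0 (hI _) (hg.mul (contDiff_pd 1 hf)),
    pd_mul 1 (hI _) (hg.mul (contDiff_pd 0 hf)), hc, hc]
  ring

/-- The bracket of two periodic functions integrates to zero over the cell. -/
lemma setIntegral_cell_pbr {g f : Vec → ℂ} (hg : ContDiff ℝ (⊤ : ℕ∞) g)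
    (hf : ContDiff ℝ (⊤ : ℕ∞) f) (hgp : ∀ x, ∀ v ∈ TriLat, g (x + v) = g x)
    (hfp : ∀ x, ∀ v ∈ TriLat, f (x + v) = f x) :
    ∫ x in cellΩ, pbr g f x = 0 := by
  have hsm : ∀ j : Fin 2, ContDiff ℝ (⊤ : ℕ∞) (fun y => g y * pd j f y) :=
    fun j => hg.mul (contDiff_pd j hf)
  have hper : ∀ (j : Fin 2) (x : Vec), ∀ v ∈ TriLat,
      g (x + v) * pd j f (x + v) = g x * pd j f x := by
    intro j x v hv
    rw [hgp x v hv, pd_shift j hf (a := 1) (fun x => by rw [hfp x v hv, one_mul]), one_mul]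
  have hz : ∀ i j : Fin 2, ∫ x in cellΩ, pd i (fun y => g y * pd j f y) x = 0 :=
    fun i j => setIntegral_cell_pd _ ((hsm j).of_le (by exact_mod_cast le_top)) (hper j) i
  have hint : ∀ i j : Fin 2, IntegrableOn (pd i (fun y => g y * pd j f y)) cellΩ :=
    fun i j => (contDiff_pd i (hsm j)).continuous.continuousOn.integrableOn_compact isCompact_cell
  simp only [pbr_eq_div hg hf]
  rw [integral_sub (hint 0 1) (hint 1 0), hz, hz, sub_zero]

/-- For a smooth, Λ-periodic, even real function b with B = b·σ₂,
and for a smooth K-pseudo-periodic Φ₁ with Φ₂(x) = conj(Φ₁(−x)), one has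
⟨Φ₁, L^B Φ₁⟩_{L²(Ω)} = −⟨Φ₂, L^B Φ₂⟩_{L²(Ω)}. -/
theorem stmt0 (b : Vec → ℝ) (hb_smooth : ContDiff ℝ (⊤ : ℕ∞) b)
    (hb_per : ∀ x : Vec, ∀ v ∈ TriLat, b (x + v) = b x)
    (hb_even : ∀ x : Vec, b (-x) = b x)
    (B : Vec → Matrix (Fin 2) (Fin 2) ℂ)
    (hB : ∀ x, B x = (b x : ℂ) • σ₂)
    (Φ₁ : Vec → ℂ) (hΦ₁_smooth : ContDiff ℝ (⊤ : ℕ∞) Φ₁) (hΦ₁_pp : PseudoPeriodic Φ₁)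
    (Φ₂ : Vec → ℂ) (hΦ₂ : ∀ x, Φ₂ x = (starRingEnd ℂ) (Φ₁ (-x))) :
    ∫ x in cellΩ, (starRingEnd ℂ) (Φ₁ x) * LM B Φ₁ x
      = -∫ x in cellΩ, (starRingEnd ℂ) (Φ₂ x) * LM B Φ₂ x := by
  have hg : ContDiff ℝ (⊤ : ℕ∞) (fun x => (b x : ℂ)) := Complex.ofRealCLM.contDiff.comp hb_smooth
  set g : Vec → ℂ := fun x => (b x : ℂ) with hgdef
  have hgp : ∀ x, ∀ v ∈ TriLat, g (x + v) = g x := fun x v hv => by simp [hgdef, hb_per x v hv]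
  have hgc : ∀ (j : Fin 2) (x : Vec), conj (pd j g x) = pd j g x := by
    intro j x
    rw [← pd_conj j hg]
    simp [hgdef]
  have hgn : ∀ (j : Fin 2) (x : Vec), pd j g x = -pd j g (-x) := by
    intro j x
    rw [← pd_comp_neg j hg]
    simp [hgdef, hb_even]
  have hΦ₂' : Φ₂ = fun x => conj (Φ₁ (-x)) := funext hΦ₂
  have hs1n : ContDiff ℝ (⊤ : ℕ∞) (fun x => Φ₁ (-x)) := hΦ₁_smooth.comp contDiff_neg
  have hs2 : ContDiff ℝ (⊤ : ℕ∞) Φ₂ := hΦ₂' ▸ contDiff_conj hs1n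
  have hpd2 : ∀ (j : Fin 2) (x : Vec), pd j Φ₂ x = -conj (pd j Φ₁ (-x)) := by
    intro j x
    rw [hΦ₂', pd_conj j hs1n, pd_comp_neg j hΦ₁_smooth, map_neg]
  simp only [LM_eq hg hΦ₁_smooth hB, LM_eq hg hs2 hB]
  set G : Vec → ℂ := fun x => conj (Φ₁ x) * (Complex.I * pbr g Φ₁ x) with hG
  have hphase : ∀ v : Vec, conj (Complex.exp (Complex.I * (dot Kpt v : ℂ)))
      * Complex.exp (Complex.I * (dot Kpt v : ℂ)) = 1 := by
    intro v
    rw [← Complex.exp_conj, ← Complex.exp_add]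
    simp
  have hGp : ∀ x, ∀ v ∈ TriLat, G (x + v) = G x := by
    intro x v hv
    have h1 := fun j => pd_shift j hΦ₁_smooth (fun x => hΦ₁_pp x v hv) x
    have h2 := fun j => pd_shift j hg (a := 1) (fun x => by rw [hgp x v hv, one_mul]) x
    simp only [hG, pbr, h1, h2, hΦ₁_pp x v hv, map_mul]
    linear_combination (conj (Φ₁ x) * (Complex.I *
      (pd 0 g x * pd 1 Φ₁ x - pd 1 g x * pd 0 Φ₁ x))) * hphase v
  have hG2 : ∀ x, conj (Φ₂ x) * (Complex.I * pbr g Φ₂ x) = -conj (G (-x)) := by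
    intro x
    simp only [hG, pbr, hpd2, hΦ₂, hgn _ x, map_mul, map_sub, hgc, Complex.conj_conj,
      Complex.conj_I]
    ring
  simp only [hG2]
  rw [integral_neg, neg_neg, integral_conj, setIntegral_cell_neg G hGp, ← integral_conj,
    ← sub_eq_zero]
  have hGcont : Continuous G := by
    have h1 := fun j => (contDiff_pd j hΦ₁_smooth).continuous
    have h2 := fun j => (contDiff_pd j hg).continuous
    have h3 := (contDiff_conj hΦ₁_smooth).continuous
    exact h3.mul (continuous_const.mul (((h2 0).mul (h1 1)).sub ((h2 1).mul (h1 0))))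
  have hGcc : Continuous (fun x => conj (G x)) := Complex.continuous_conj.comp hGcont
  rw [← integral_sub (hGcont.continuousOn.integrableOn_compact isCompact_cell)
    (hGcc.continuousOn.integrableOn_compact isCompact_cell)]
  have hρ : ContDiff ℝ (⊤ : ℕ∞) (fun x => conj (Φ₁ x) * Φ₁ x) :=
    (contDiff_conj hΦ₁_smooth).mul hΦ₁_smooth
  have hρp : ∀ x, ∀ v ∈ TriLat, conj (Φ₁ (x + v)) * Φ₁ (x + v) = conj (Φ₁ x) * Φ₁ x := by
    intro x v hv
    rw [hΦ₁_pp x v hv, map_mul]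
    linear_combination (conj (Φ₁ x) * Φ₁ x) * hphase v
  have hdiff : ∀ x, G x - conj (G x) = Complex.I * pbr g (fun x => conj (Φ₁ x) * Φ₁ x) x := by
    intro x
    simp only [hG, pbr, pd_mul _ (contDiff_conj hΦ₁_smooth) hΦ₁_smooth, pd_conj _ hΦ₁_smooth,
      map_mul, map_sub, hgc, Complex.conj_conj, Complex.conj_I]
    ring
  simp only [hdiff]
  rw [integral_const_mul, setIntegral_cell_pbr hg hρ hgp hρp, mul_zero]
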